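/- Let Ω ⊆ ℂ be a bounded open set, T > 0, and let u₁, u₂ : Ω̄ × [0,T] → ℝ be continuous, smooth on Ω × (0,T], and satisfy the Ricci flow equation ∂u_i/∂t = e^{−2u_i}Δu_i on Ω × (0,T]. If u₁ ≤ u₂ on (Ω̄ × {0}) ∪ (∂Ω × [0,T]), then u₁ ≤ u₂ on all of Ω̄ × [0,T]. -/

import Mathlib

open Complex Metric Set

/-- The flat Laplacian of `u : ℂ → ℝ` at `z`, i.e. `∂²u/∂x² + ∂²u/∂y²`. -/
noncomputable def lap (u : ℂ → ℝ) (z : ℂ) : ℝ :=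
  iteratedFDeriv ℝ 2 u z ![1, 1] + iteratedFDeriv ℝ 2 u z ![Complex.I, Complex.I]

/-!
The pointwise maximum principle does not apply directly to `w = u₁ - u₂`: the coefficients
`exp (-2 uᵢ)` differ, and the resulting error is a multiple of `Δ u₂`, which need not be bounded
near the parabolic boundary. With `β y = exp (2 y) / 2` the Ricci flow equation becomes
`∂ₜ (β u) = Δ u`, whose right-hand side is linear in `u`, so that it can be integrated in time; the
maximum principle is applied to `Q x = ∫ s in a..b, max (w x s) 0` instead.

If `Q + η ‖·‖²` has an interior local maximum at `x₀`, freeze the set `A` of times at which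
`w x₀ > 0`. The smooth function `x ↦ ∫ s in A, w x s` lies below `Q` and touches it at `x₀`, so
`∫ s in A, Δ w x₀ ≤ -2 η dim E`; but this integral bounds the growth over `[a, b]` of the positive
part of `β u₁ - β u₂` at `x₀`, which is at least `-η` once `a` is close to `0`. Hence the maximum is
attained on the frontier, where `Q = 0`, and letting `η → 0` gives `w ≤ 0`.
-/

open Filter Topology MeasureTheory Laplacian

section PosPart

lemma exists_hasDerivWithinAt_Iio_max_zero {f : ℝ → ℝ} {f' x : ℝ} (hf : HasDerivAt f f' x) :
    ∃ d ≤ if 0 < f x then f' else 0, HasDerivWithinAt (fun y => max (f y) 0) d (Iio x) x := by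
  rcases lt_trichotomy (f x) 0 with hneg | hzero | hpos
  · refine ⟨0, by simp [hneg.not_gt], ?_⟩
    have hev : (fun y => max (f y) 0) =ᶠ[𝓝 x] fun _ => 0 := by
      filter_upwards [hf.continuousAt.eventually_lt_const hneg] with y hy
      exact max_eq_right hy.le
    exact ((hasDerivAt_const x (0 : ℝ)).congr_of_eventuallyEq hev).hasDerivWithinAt
  · refine ⟨min f' 0, by simp [hzero], ?_⟩
    rw [hasDerivWithinAt_iff_tendsto_slope' self_notMem_Iio]
    have hslope : Tendsto (fun y => min (slope f x y) 0) (𝓝[<] x) (𝓝 (min f' 0)) :=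
      ((hasDerivWithinAt_iff_tendsto_slope' self_notMem_Iio).mp hf.hasDerivWithinAt).min
        tendsto_const_nhds
    refine hslope.congr' ?_
    filter_upwards [self_mem_nhdsWithin] with y (hy : y < x)
    have hinv : (y - x)⁻¹ < 0 := inv_lt_zero.mpr (sub_neg.mpr hy)
    simp only [slope_def_module, hzero, sub_zero, max_self]
    rw [smul_max_of_nonpos hinv.le, smul_zero]
  · refine ⟨f', by simp [hpos], ?_⟩
    have hev : (fun y => max (f y) 0) =ᶠ[𝓝 x] f := by
      filter_upwards [hf.continuousAt.eventually_const_lt hpos] with y hy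
      exact max_eq_left hy.le
    exact (hf.congr_of_eventuallyEq hev).hasDerivWithinAt

variable {a b : ℝ}

lemma sub_le_integral_of_hasDerivWithinAt_Iio_le {g φ : ℝ → ℝ} (hab : a ≤ b)
    (hg : ContinuousOn g (Icc a b))
    (hderiv : ∀ x ∈ Ioo a b, ∃ d ≤ φ x, HasDerivWithinAt g d (Iio x) x)
    (hφ : IntegrableOn φ (Icc a b)) :
    g b - g a ≤ ∫ x in a..b, φ x := by
  choose! d hd hderiv using hderiv
  have hneg_mem : ∀ x, -x ∈ Ioo a b ↔ x ∈ Ioo (-b) (-a) := fun x => by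
    constructor <;> rintro ⟨h₁, h₂⟩ <;> constructor <;> linarith
  have hright : ∀ x ∈ Ioo (-b) (-a),
      HasDerivWithinAt (fun y => g (-y)) (-d (-x)) (Ioi x) x := fun x hx => by
    have hmaps : MapsTo Neg.neg (Ioi x) (Iio (-x)) := fun y (hy : x < y) => neg_lt_neg hy
    simpa [Function.comp_def] using (hderiv (-x) ((hneg_mem x).mpr hx)).scomp x
      (hasDerivAt_neg x).hasDerivWithinAt hmaps
  have key := intervalIntegral.integral_le_sub_of_hasDeriv_right_of_le
    (φ := fun x => -φ (-x)) (neg_le_neg hab)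
    (hg.comp continuousOn_neg fun x hx => ⟨le_neg_of_le_neg hx.2, neg_le_of_neg_le hx.1⟩)
    hright ?_ fun x hx => neg_le_neg (hd _ ((hneg_mem x).mpr hx))
  · simp only [intervalIntegral.integral_neg, intervalIntegral.integral_comp_neg φ, neg_neg,
      Function.comp_apply] at key
    linarith
  · have := hφ.comp_neg
    simpa using this.neg

lemma measurableSet_Icc_inter_pos {f : ℝ → ℝ} (hf : ContinuousOn f (Icc a b)) :
    MeasurableSet (Icc a b ∩ {x | 0 < f x}) := by
  have hopen := continuousOn_iff'.mp hf (Ioi 0) isOpen_Ioi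
  obtain ⟨O, hO, hfO⟩ := hopen
  have : Icc a b ∩ {x | 0 < f x} = O ∩ Icc a b := by rw [← hfO, inter_comm]; rfl
  exact this ▸ hO.measurableSet.inter measurableSet_Icc

lemma max_zero_sub_max_zero_le_setIntegral {f h : ℝ → ℝ} (hab : a ≤ b)
    (hf : ContinuousOn f (Icc a b)) (hderiv : ∀ x ∈ Ioo a b, ∃ d ≤ h x, HasDerivAt f d x)
    (hh : IntegrableOn h (Icc a b)) :
    max (f b) 0 - max (f a) 0 ≤ ∫ x in Icc a b ∩ {x | 0 < f x}, h x := by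
  have hmeas : MeasurableSet (Icc a b ∩ {x | 0 < f x}) := measurableSet_Icc_inter_pos hf
  have key := sub_le_integral_of_hasDerivWithinAt_Iio_le (g := fun x => max (f x) 0)
    (φ := (Icc a b ∩ {x | 0 < f x}).indicator h) hab (hf.sup continuousOn_const)
    (fun x hx => ?_) (hh.indicator hmeas)
  · rwa [intervalIntegral.integral_of_le hab, ← integral_Icc_eq_integral_Ioc,
      setIntegral_indicator hmeas, inter_eq_right.mpr inter_subset_left] at key
  · obtain ⟨d, hd, hfd⟩ := hderiv x hx
    obtain ⟨d', hd', hmax⟩ := exists_hasDerivWithinAt_Iio_max_zero hfd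
    refine ⟨d', hd'.trans ?_, hmax⟩
    by_cases hpos : 0 < f x
    · simpa [hpos, Ioo_subset_Icc_self hx] using hd
    · simp [hpos]

lemma nonpos_of_setIntegral_max_zero_nonpos {f : ℝ → ℝ} (hab : a < b)
    (hf : ContinuousOn f (Icc a b)) (hint : ∫ x in Icc a b, max (f x) 0 ≤ 0) :
    ∀ x ∈ Icc a b, f x ≤ 0 := fun x hx => by
  by_contra! hpos
  rw [integral_Icc_eq_integral_Ioc, ← intervalIntegral.integral_of_le hab.le] at hint
  exact hint.not_gt (intervalIntegral.integral_pos hab (hf.sup continuousOn_const)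
    (fun _ _ => le_max_right _ _) ⟨x, hx, lt_max_of_lt_left hpos⟩)

end PosPart

section SecondDerivativeTest

variable {E : Type*} [NormedAddCommGroup E] [NormedSpace ℝ E]

lemma second_fderiv_apply_self_nonpos_of_isLocalMax {f : E → ℝ} {f' : E → E →L[ℝ] ℝ}
    {f'' : E →L[ℝ] E →L[ℝ] ℝ} {x : E} (hmax : IsLocalMax f x)
    (hf : ∀ᶠ y in 𝓝 x, HasFDerivAt f (f' y) y) (hf' : HasFDerivAt f' f'' x) (e : E) :
    f'' e e ≤ 0 := by
  let line : ℝ → E := fun ρ => x + ρ • e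
  have hline : ∀ ρ, HasDerivAt line e ρ := fun ρ => by
    simpa [line] using ((hasDerivAt_id ρ).smul_const e).const_add x
  have hline0 : line 0 = x := by simp [line]
  have htendsto : Tendsto line (𝓝 0) (𝓝 x) := hline0 ▸ (hline 0).continuousAt.tendsto
  have hderiv : ∀ᶠ ρ in 𝓝 0, HasDerivAt (f ∘ line) (f' (line ρ) e) ρ := by
    filter_upwards [htendsto.eventually hf] with ρ hρ
    exact hρ.comp_hasDerivAt ρ (hline ρ)
  have hderiv2 : deriv (deriv (f ∘ line)) 0 = f'' e e := by
    have hev : deriv (f ∘ line) =ᶠ[𝓝 0] fun ρ => f' (line ρ) e := hderiv.mono fun _ h => h.deriv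
    rw [hev.deriv_eq]
    have hcomp : HasDerivAt (fun ρ => f' (line ρ)) (f'' e) 0 :=
      HasFDerivAt.comp_hasDerivAt (f := line) 0 (hline0.symm ▸ hf') (hline 0)
    simpa using (hcomp.clm_apply (hasDerivAt_const 0 e)).deriv
  have hmax0 : IsLocalMax (f ∘ line) 0 := by
    have := htendsto.eventually hmax
    simpa [IsLocalMax, IsMaxFilter, hline0] using this
  by_contra! hpos
  -- A positive second derivative would make `0` a local minimum too, so `f ∘ line` would be
  -- locally constant.
  have hmin0 : IsLocalMin (f ∘ line) 0 :=
    isLocalMin_of_deriv_deriv_pos (hderiv2 ▸ hpos) hmax0.deriv_eq_zero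
      hderiv.self_of_nhds.continuousAt
  have hconst : f ∘ line =ᶠ[𝓝 0] fun _ => (f ∘ line) 0 := by
    filter_upwards [hmax0, hmin0] with ρ h₁ h₂ using le_antisymm h₁ h₂
  rw [← hderiv2, hconst.deriv.deriv_eq] at hpos
  simp at hpos

end SecondDerivativeTest

section ParametricIntegral

variable {H F X : Type*} [NormedAddCommGroup H] [NormedSpace ℝ H]
  [NormedAddCommGroup F] [NormedSpace ℝ F] [NormedAddCommGroup X] [NormedSpace ℝ X]
  {f : H → X → F} {U : Set H} {J : Set X}

lemma contDiffOn_uncurry_fderiv {m n : WithTop ℕ∞} (hU : IsOpen U) (hJ : IsOpen J)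
    (hf : ContDiffOn ℝ n f.uncurry (U ×ˢ J)) (hmn : m + 1 ≤ n) :
    ContDiffOn ℝ m (fun x s => fderiv ℝ (f · s) x).uncurry (U ×ˢ J) := fun p hp => by
  have hflip : ContDiffAt ℝ n (fun (q : H × X) (x : H) => f x q.2).uncurry (p, p.1) :=
    ContDiffAt.comp (g := f.uncurry) (f := fun q : (H × X) × H => (q.2, q.1.2)) _
      (hf.contDiffAt ((hU.prod hJ).mem_nhds hp)) (by fun_prop)
  exact (hflip.fderiv contDiffAt_fst hmn).contDiffWithinAt

lemma contDiffAt_left_of_contDiffOn_uncurry {n : WithTop ℕ∞} (hU : IsOpen U) (hJ : IsOpen J)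
    (hf : ContDiffOn ℝ n f.uncurry (U ×ˢ J)) {x : H} {s : X} (hx : x ∈ U) (hs : s ∈ J) :
    ContDiffAt ℝ n (f · s) x :=
  ContDiffAt.comp (g := f.uncurry) (f := fun y => (y, s)) x
    (hf.contDiffAt ((hU.prod hJ).mem_nhds ⟨hx, hs⟩)) (by fun_prop)

variable [MeasurableSpace X] [OpensMeasurableSpace X] {μ : Measure X} [IsFiniteMeasureOnCompacts μ]
  {K A : Set X}

lemma hasFDerivAt_setIntegral_of_contDiffOn (hU : IsOpen U) (hJ : IsOpen J)
    (hf : ContDiffOn ℝ 1 f.uncurry (U ×ˢ J)) (hK : IsCompact K) (hKJ : K ⊆ J)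
    (hA : MeasurableSet A) (hAK : A ⊆ K) {x₀ : H} (hx₀ : x₀ ∈ U) :
    HasFDerivAt (fun x => ∫ s in A, f x s ∂μ) (∫ s in A, fderiv ℝ (f · s) x₀ ∂μ) x₀ := by
  have hf' := (contDiffOn_uncurry_fderiv (m := 0) hU hJ hf (by simp)).continuousOn
  obtain ⟨C, hC⟩ := hK.exists_bound_of_continuousOn ((hf'.uncurry_left x₀ hx₀).mono hKJ)
  have hbound : ∀ᶠ x in 𝓝 x₀, ∀ s ∈ K, ‖fderiv ℝ (f · s) x‖ < C + 1 := by
    refine hK.eventually_forall_of_forall_eventually fun s hs => ?_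
    have hmem : U ×ˢ J ∈ 𝓝 (x₀, s) := (hU.prod hJ).mem_nhds ⟨hx₀, hKJ hs⟩
    exact (hf'.continuousAt hmem).norm.eventually_lt_const ((hC s hs).trans_lt (lt_add_one C))
  have hUx₀ : ∀ᶠ x in 𝓝 x₀, x ∈ U := hU.mem_nhds hx₀
  have hAfin : μ A ≠ ⊤ := measure_ne_top_of_subset hAK hK.measure_ne_top
  have hint : ∀ x ∈ U, IntegrableOn (f x) A μ := fun x hx =>
    ((hf.continuousOn.uncurry_left x hx).mono hKJ).integrableOn_of_subset_isCompact hK hA hAK hAfin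
  have hint' : IntegrableOn (fun s => fderiv ℝ (f · s) x₀) A μ :=
    ((hf'.uncurry_left x₀ hx₀).mono hKJ).integrableOn_of_subset_isCompact hK hA hAK hAfin
  refine hasFDerivAt_integral_of_dominated_of_fderiv_le (bound := fun _ => C + 1)
    (F' := fun x s => fderiv ℝ (f · s) x) (hUx₀.and hbound)
    (hUx₀.mono fun x hx => (hint x hx).aestronglyMeasurable) (hint x₀ hx₀)
    hint'.aestronglyMeasurable
    (ae_restrict_of_forall_mem hA fun s hs x hx => (hx.2 s (hAK hs)).le)
    (integrableOn_const hAfin)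
    (ae_restrict_of_forall_mem hA fun s hs x hx => ?_)
  exact ((contDiffAt_left_of_contDiffOn_uncurry hU hJ hf hx.1 (hKJ (hAK hs))).differentiableAt
    one_ne_zero).hasFDerivAt

end ParametricIntegral

section LaplacianTest

lemma hasFDerivAt_const_mul_norm_sq {E : Type*} [NormedAddCommGroup E] [InnerProductSpace ℝ E]
    (η : ℝ) (x : E) :
    HasFDerivAt (fun x => η * ‖x‖ ^ 2) (((2 * η) • innerSL ℝ : E →L[ℝ] E →L[ℝ] ℝ) x) x := by
  refine ((hasStrictFDerivAt_norm_sq x).hasFDerivAt.const_mul η).congr_fderiv ?_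
  rw [smul_apply, ← Nat.cast_smul_eq_nsmul ℝ, smul_smul, Nat.cast_ofNat, mul_comm]

variable {E X : Type*} [NormedAddCommGroup E] [InnerProductSpace ℝ E] [FiniteDimensional ℝ E]
  [NormedAddCommGroup X] [NormedSpace ℝ X] {f : E → X → ℝ} {U : Set E} {J : Set X}

lemma laplacian_eq_sum_fderiv_fderiv (f : E → ℝ) (x : E) :
    Δ f x = ∑ i, fderiv ℝ (fderiv ℝ f) x (stdOrthonormalBasis ℝ E i)
      (stdOrthonormalBasis ℝ E i) := by
  simp [InnerProductSpace.laplacian_eq_iteratedFDeriv_stdOrthonormalBasis,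
    iteratedFDeriv_two_apply]

lemma continuousOn_laplacian (hU : IsOpen U) (hJ : IsOpen J)
    (hf : ContDiffOn ℝ 2 f.uncurry (U ×ˢ J)) {x : E} (hx : x ∈ U) :
    ContinuousOn (fun s => Δ (f · s) x) J := by
  have hf' := contDiffOn_uncurry_fderiv (m := 1) hU hJ hf one_add_one_eq_two.le
  have hf'' :=
    (contDiffOn_uncurry_fderiv (m := 0) hU hJ hf' (by simp)).continuousOn.uncurry_left x hx
  simp only [laplacian_eq_sum_fderiv_fderiv]
  fun_prop

variable [MeasurableSpace X] [OpensMeasurableSpace X] {μ : Measure X}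
  [IsFiniteMeasureOnCompacts μ] {K A : Set X}

set_option maxSynthPendingDepth 4 in
lemma setIntegral_laplacian_le_of_isLocalMax (hU : IsOpen U) (hJ : IsOpen J)
    (hf : ContDiffOn ℝ 2 f.uncurry (U ×ˢ J)) (hK : IsCompact K) (hKJ : K ⊆ J)
    (hA : MeasurableSet A) (hAK : A ⊆ K) {x₀ : E} (hx₀ : x₀ ∈ U) {η : ℝ}
    (hmax : IsLocalMax (fun x => (∫ s in A, f x s ∂μ) + η * ‖x‖ ^ 2) x₀) :
    ∫ s in A, Δ (f · s) x₀ ∂μ ≤ -(2 * η * Module.finrank ℝ E) := by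
  have hf' := contDiffOn_uncurry_fderiv (m := 1) hU hJ hf one_add_one_eq_two.le
  have hf'' := (contDiffOn_uncurry_fderiv (m := 0) hU hJ hf' (by simp)).continuousOn
  have hint : IntegrableOn (fun s => fderiv ℝ (fderiv ℝ (f · s)) x₀) A μ :=
    ((hf''.uncurry_left x₀ hx₀).mono hKJ).integrableOn_of_subset_isCompact hK hA hAK
      (measure_ne_top_of_subset hAK hK.measure_ne_top)
  let B : E →L[ℝ] E →L[ℝ] ℝ := (2 * η) • innerSL ℝ
  have hB_apply : ∀ x v, B x v = 2 * η * inner ℝ x v := fun _ _ => rfl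
  have hderiv : ∀ᶠ x in 𝓝 x₀, HasFDerivAt (fun x => (∫ s in A, f x s ∂μ) + η * ‖x‖ ^ 2)
      ((∫ s in A, fderiv ℝ (f · s) x ∂μ) + B x) x := by
    filter_upwards [hU.mem_nhds hx₀] with x hx
    exact (hasFDerivAt_setIntegral_of_contDiffOn hU hJ (hf.of_le one_le_two) hK hKJ hA hAK hx).add
      (hasFDerivAt_const_mul_norm_sq η x)
  have hderiv2 : HasFDerivAt
      (fun x => (∫ s in A, fderiv ℝ (f · s) x ∂μ) + B x)
      ((∫ s in A, fderiv ℝ (fderiv ℝ (f · s)) x₀ ∂μ) + B) x₀ :=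
    (hasFDerivAt_setIntegral_of_contDiffOn hU hJ hf' hK hKJ hA hAK hx₀).add
      B.hasFDerivAt
  have hdir : ∀ i, ∫ s in A, fderiv ℝ (fderiv ℝ (f · s)) x₀ (stdOrthonormalBasis ℝ E i)
      (stdOrthonormalBasis ℝ E i) ∂μ ≤ -(2 * η) := fun i => by
    have := second_fderiv_apply_self_nonpos_of_isLocalMax hmax hderiv hderiv2
      (stdOrthonormalBasis ℝ E i)
    rw [add_apply, add_apply, ContinuousLinearMap.integral_apply hint,
      ContinuousLinearMap.integral_apply (hint.apply_continuousLinearMap _), hB_apply,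
      real_inner_self_eq_norm_sq, OrthonormalBasis.norm_eq_one] at this
    linarith
  simp only [laplacian_eq_sum_fderiv_fderiv]
  rw [integral_finsetSum _ fun i _ =>
    (hint.apply_continuousLinearMap _).apply_continuousLinearMap _]
  refine (Finset.sum_le_sum fun i _ => hdir i).trans_eq ?_
  rw [Finset.sum_const, Finset.card_univ, Fintype.card_fin, nsmul_eq_mul]
  ring

end LaplacianTest

section PosPartIntegral

variable {P X : Type*} [TopologicalSpace P] [MeasurableSpace X] {μ : Measure X}

lemma continuousOn_setIntegral_of_isCompact [FirstCountableTopology P] [TopologicalSpace X]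
    [OpensMeasurableSpace X] [IsFiniteMeasureOnCompacts μ]
    {F : Type*} [NormedAddCommGroup F] [NormedSpace ℝ F] {f : P → X → F} {D : Set P} {K : Set X}
    (hK : IsCompact K) (hKm : MeasurableSet K) (hf : ContinuousOn f.uncurry (D ×ˢ K)) :
    ContinuousOn (fun x => ∫ s in K, f x s ∂μ) D := fun x₀ hx₀ => by
  obtain ⟨C, hC⟩ := hK.exists_bound_of_continuousOn (hf.uncurry_left x₀ hx₀)
  obtain ⟨v, hv, hclose⟩ := hK.mem_uniformity_of_prod hf hx₀ (dist_mem_uniformity one_pos)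
  refine continuousWithinAt_of_dominated (bound := fun _ => 1 + C) ?_ ?_
    (integrableOn_const hK.measure_ne_top) ?_
  · filter_upwards [self_mem_nhdsWithin] with x hx
    exact (hf.uncurry_left x hx).aestronglyMeasurable_of_isCompact hK hKm
  · filter_upwards [hv] with x hx
    refine ae_restrict_of_forall_mem hKm fun s hs => ?_
    have hdist : ‖f x s - f x₀ s‖ < 1 := dist_eq_norm (f x s) _ ▸ hclose x hx s hs
    linarith [norm_le_norm_sub_add (f x s) (f x₀ s), hC s hs]
  · exact ae_restrict_of_forall_mem hKm fun s hs => hf.uncurry_right s hs x₀ hx₀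

lemma isLocalMax_setIntegral_of_isLocalMax_setIntegral_max_zero {f : P → X → ℝ} {g : P → ℝ}
    {K A : Set X} (hK : MeasurableSet K) (hA : MeasurableSet A) (hAK : A ⊆ K) {x₀ : P}
    (hint : ∀ᶠ x in 𝓝 x₀, IntegrableOn (f x) K μ) (hpos : ∀ s ∈ A, 0 ≤ f x₀ s)
    (hneg : ∀ s ∈ K \ A, f x₀ s ≤ 0)
    (hmax : IsLocalMax (fun x => (∫ s in K, max (f x s) 0 ∂μ) + g x) x₀) :
    IsLocalMax (fun x => (∫ s in A, f x s ∂μ) + g x) x₀ := by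
  have heq : ∫ s in A, f x₀ s ∂μ = ∫ s in K, max (f x₀ s) 0 ∂μ :=
    (setIntegral_congr_fun hA fun s hs => (max_eq_left (hpos s hs)).symm).trans
      (setIntegral_eq_of_subset_of_forall_sdiff_eq_zero hK hAK
        fun s hs => max_eq_right (hneg s hs)).symm
  filter_upwards [hint, hmax] with x hx hmaxx
  have hint_max : IntegrableOn (fun s => max (f x s) 0) K μ := hx.pos_part
  calc (∫ s in A, f x s ∂μ) + g x
      ≤ (∫ s in A, max (f x s) 0 ∂μ) + g x := by
        gcongr ?_ + _
        exact setIntegral_mono (hx.mono_set hAK) (hint_max.mono_set hAK) fun s => le_max_left _ _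
    _ ≤ (∫ s in K, max (f x s) 0 ∂μ) + g x := by
        gcongr ?_ + _
        exact setIntegral_mono_set hint_max (ae_of_all _ fun s => le_max_right _ _)
          hAK.eventuallyLE
    _ ≤ (∫ s in A, f x₀ s ∂μ) + g x₀ := heq ▸ hmaxx

end PosPartIntegral

lemma eventually_forall_lt_of_isCompact {X S : Type*} [TopologicalSpace X] [TopologicalSpace S]
    {g : X → S → ℝ} {K : Set X} {D : Set S} (hK : IsCompact K)
    (hg : ContinuousOn g.uncurry (K ×ˢ D)) {s₀ : S} (hs₀ : s₀ ∈ D) {c c' : ℝ} (hc : c < c')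
    (hle : ∀ x ∈ K, g x s₀ ≤ c) :
    ∀ᶠ s in 𝓝[D] s₀, ∀ x ∈ K, g x s < c' := by
  have hswap : ContinuousOn (fun s x => g x s).uncurry (D ×ˢ K) :=
    hg.comp continuous_swap.continuousOn fun p hp => ⟨hp.2, hp.1⟩
  obtain ⟨v, hv, hclose⟩ := hK.mem_uniformity_of_prod hswap hs₀ (dist_mem_uniformity (sub_pos.2 hc))
  filter_upwards [hv] with s hs x hx
  have hdist : |g x s - g x s₀| < c' - c := hclose s hs x hx
  linarith [le_abs_self (g x s - g x s₀), hle x hx]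

section Filtration

variable {E : Type*} [NormedAddCommGroup E] [InnerProductSpace ℝ E] [FiniteDimensional ℝ E]

/-- A classical subsolution on `Ω × J` of the filtration equation `∂ₜ (β (u)) = Δ u`: the form of a
nonlinear diffusion equation in which the comparison argument is carried out. The time derivative is
the witness `d`, so that `β ∘ u` is required to be differentiable in time. -/
structure IsFiltrationSubsolution (β : ℝ → ℝ) (u : E → ℝ → ℝ) (Ω : Set E) (J : Set ℝ) : Prop where
  contDiffOn : ContDiffOn ℝ 2 u.uncurry (Ω ×ˢ J)
  exists_hasDerivAt_le : ∀ x ∈ Ω, ∀ t ∈ J,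
    ∃ d ≤ Δ (u · t) x, HasDerivAt (fun s => β (u x s)) d t

/-- A classical supersolution on `Ω × J` of the filtration equation `∂ₜ (β (u)) = Δ u`, with the
same conventions as `IsFiltrationSubsolution`. -/
structure IsFiltrationSupersolution (β : ℝ → ℝ) (u : E → ℝ → ℝ) (Ω : Set E) (J : Set ℝ) :
    Prop where
  contDiffOn : ContDiffOn ℝ 2 u.uncurry (Ω ×ˢ J)
  exists_hasDerivAt_ge : ∀ x ∈ Ω, ∀ t ∈ J,
    ∃ d ≥ Δ (u · t) x, HasDerivAt (fun s => β (u x s)) d t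

variable {β : ℝ → ℝ} {u₁ u₂ : E → ℝ → ℝ} {Ω : Set E} {J : Set ℝ} {a b η : ℝ}

lemma exists_hasDerivAt_sub_le_laplacian_sub (hΩ : IsOpen Ω) (hJ : IsOpen J)
    (h₁ : IsFiltrationSubsolution β u₁ Ω J) (h₂ : IsFiltrationSupersolution β u₂ Ω J)
    {x : E} (hx : x ∈ Ω) {t : ℝ} (ht : t ∈ J) :
    ∃ d ≤ Δ (fun y => u₁ y t - u₂ y t) x,
      HasDerivAt (fun s => β (u₁ x s) - β (u₂ x s)) d t := by
  obtain ⟨d₁, hd₁, hderiv₁⟩ := h₁.exists_hasDerivAt_le x hx t ht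
  obtain ⟨d₂, hd₂, hderiv₂⟩ := h₂.exists_hasDerivAt_ge x hx t ht
  refine ⟨d₁ - d₂, ?_, hderiv₁.sub hderiv₂⟩
  have hlap : Δ (fun y => u₁ y t - u₂ y t) x = Δ (u₁ · t) x - Δ (u₂ · t) x :=
    (contDiffAt_left_of_contDiffOn_uncurry hΩ hJ h₁.contDiffOn hx ht).laplacian_sub
      (contDiffAt_left_of_contDiffOn_uncurry hΩ hJ h₂.contDiffOn hx ht)
  exact hlap ▸ sub_le_sub hd₁ hd₂

lemma not_isLocalMax_setIntegral_max_sub_zero [Nontrivial E] (hβ : StrictMono β)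
    (hΩ : IsOpen Ω) (hJ : IsOpen J) (h₁ : IsFiltrationSubsolution β u₁ Ω J)
    (h₂ : IsFiltrationSupersolution β u₂ Ω J) (hab : a ≤ b) (habJ : Icc a b ⊆ J) (hη : 0 < η)
    {x₀ : E} (hx₀ : x₀ ∈ Ω) (ha : β (u₁ x₀ a) - β (u₂ x₀ a) ≤ η) :
    ¬ IsLocalMax (fun x => (∫ s in Icc a b, max (u₁ x s - u₂ x s) 0) + η * ‖x‖ ^ 2) x₀ := by
  intro hmax
  let v : ℝ → ℝ := fun s => β (u₁ x₀ s) - β (u₂ x₀ s)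
  let A : Set ℝ := Icc a b ∩ {s | 0 < v s}
  have hderiv : ∀ s ∈ Icc a b, ∃ d ≤ Δ (fun x => u₁ x s - u₂ x s) x₀, HasDerivAt v d s :=
    fun s hs => exists_hasDerivAt_sub_le_laplacian_sub hΩ hJ h₁ h₂ hx₀ (habJ hs)
  have hv : ContinuousOn v (Icc a b) := fun s hs =>
    let ⟨_, _, hd⟩ := hderiv s hs
    hd.continuousAt.continuousWithinAt
  have hA : MeasurableSet A := measurableSet_Icc_inter_pos hv
  have hu : ContDiffOn ℝ 2 (fun x s => u₁ x s - u₂ x s).uncurry (Ω ×ˢ J) :=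
    h₁.contDiffOn.sub h₂.contDiffOn
  have hgrowth : -η ≤ ∫ s in A, Δ (fun x => u₁ x s - u₂ x s) x₀ := by
    have := max_zero_sub_max_zero_le_setIntegral hab hv
      (fun s hs => hderiv s (Ioo_subset_Icc_self hs))
      (((continuousOn_laplacian hΩ hJ hu hx₀).mono habJ).integrableOn_Icc)
    linarith [le_max_right (v b) 0, max_le ha hη.le]
  have hpos : ∀ s, 0 < v s ↔ 0 < u₁ x₀ s - u₂ x₀ s := fun s => by
    rw [sub_pos, sub_pos, hβ.lt_iff_lt]
  have hmaxA : IsLocalMax (fun x => (∫ s in A, (u₁ x s - u₂ x s)) + η * ‖x‖ ^ 2) x₀ := by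
    refine isLocalMax_setIntegral_of_isLocalMax_setIntegral_max_zero measurableSet_Icc hA
      inter_subset_left ?_ (fun s hs => ((hpos s).mp hs.2).le) (fun s hs => ?_) hmax
    · filter_upwards [hΩ.mem_nhds hx₀] with x hx
      exact ((hu.continuousOn.uncurry_left x hx).mono habJ).integrableOn_Icc
    · exact not_lt.mp fun h => hs.2 ⟨hs.1, (hpos s).mpr h⟩
  have htest := setIntegral_laplacian_le_of_isLocalMax hΩ hJ hu isCompact_Icc habJ hA
    inter_subset_left hx₀ hmaxA
  have hdim : (1 : ℝ) ≤ Module.finrank ℝ E := mod_cast Module.finrank_pos (R := ℝ) (M := E)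
  nlinarith [mul_le_mul_of_nonneg_left hdim hη.le]

lemma setIntegral_max_sub_zero_le [Nontrivial E] (hβ : StrictMono β)
    (hΩ : IsOpen Ω) (hΩbdd : Bornology.IsBounded Ω) (hJ : IsOpen J)
    (h₁ : IsFiltrationSubsolution β u₁ Ω J) (h₂ : IsFiltrationSupersolution β u₂ Ω J)
    (hab : a ≤ b) (habJ : Icc a b ⊆ J) (hη : 0 < η)
    (hcont : ContinuousOn (fun x s => u₁ x s - u₂ x s).uncurry (closure Ω ×ˢ Icc a b))
    (ha : ∀ x ∈ closure Ω, β (u₁ x a) - β (u₂ x a) ≤ η)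
    (hbdry : ∀ x ∈ frontier Ω, ∀ s ∈ Icc a b, u₁ x s ≤ u₂ x s)
    {R : ℝ} (hR : ∀ x ∈ closure Ω, ‖x‖ ≤ R) {z : E} (hz : z ∈ closure Ω) :
    ∫ s in Icc a b, max (u₁ z s - u₂ z s) 0 ≤ η * R ^ 2 := by
  let Q : E → ℝ := fun x => ∫ s in Icc a b, max (u₁ x s - u₂ x s) 0
  have hQ : ContinuousOn Q (closure Ω) :=
    continuousOn_setIntegral_of_isCompact isCompact_Icc measurableSet_Icc
      (hcont.sup continuousOn_const)
  obtain ⟨x₀, hx₀, hmax⟩ := hΩbdd.isCompact_closure.exists_isMaxOn ⟨z, hz⟩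
    (f := fun x => Q x + η * ‖x‖ ^ 2) (by fun_prop)
  have hx₀Ω : x₀ ∉ Ω := fun hmem =>
    not_isLocalMax_setIntegral_max_sub_zero hβ hΩ hJ h₁ h₂ hab habJ hη hmem (ha x₀ hx₀)
      (hmax.isLocalMax (mem_of_superset (hΩ.mem_nhds hmem) subset_closure))
  have hQx₀ : Q x₀ = 0 := setIntegral_eq_zero_of_forall_eq_zero fun s hs =>
    max_eq_right (sub_nonpos.mpr (hbdry x₀ (hΩ.frontier_eq ▸ ⟨hx₀, hx₀Ω⟩) s hs))
  calc Q z ≤ Q z + η * ‖z‖ ^ 2 := le_add_of_nonneg_right (by positivity)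
    _ ≤ Q x₀ + η * ‖x₀‖ ^ 2 := hmax hz
    _ = η * ‖x₀‖ ^ 2 := by rw [hQx₀, zero_add]
    _ ≤ η * R ^ 2 := by gcongr; exact hR x₀ hx₀

variable [Nontrivial E] {T : ℝ}

lemma setIntegral_max_sub_zero_le_of_initial_le (hβ : StrictMono β) (hβc : Continuous β)
    (hΩ : IsOpen Ω) (hΩbdd : Bornology.IsBounded Ω)
    (hc₁ : ContinuousOn u₁.uncurry (closure Ω ×ˢ Icc 0 T))
    (hc₂ : ContinuousOn u₂.uncurry (closure Ω ×ˢ Icc 0 T))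
    (h₁ : IsFiltrationSubsolution β u₁ Ω (Ioo 0 T))
    (h₂ : IsFiltrationSupersolution β u₂ Ω (Ioo 0 T))
    (hinit : ∀ z ∈ closure Ω, u₁ z 0 ≤ u₂ z 0)
    (hbdry : ∀ z ∈ frontier Ω, ∀ t ∈ Icc 0 T, u₁ z t ≤ u₂ z t)
    {R : ℝ} (hR : ∀ x ∈ closure Ω, ‖x‖ ≤ R) (hη : 0 < η) (ha : 0 < a) (hab : a ≤ b) (hbT : b < T)
    {z : E} (hz : z ∈ closure Ω) :
    ∫ s in Icc a b, max (u₁ z s - u₂ z s) 0 ≤ η * R ^ 2 := by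
  have hsmall : ∀ᶠ c in 𝓝[Icc 0 T] 0, ∀ x ∈ closure Ω, β (u₁ x c) - β (u₂ x c) < η :=
    eventually_forall_lt_of_isCompact hΩbdd.isCompact_closure
      ((hβc.comp_continuousOn hc₁).sub (hβc.comp_continuousOn hc₂))
      (left_mem_Icc.mpr (ha.le.trans (hab.trans hbT.le))) hη
      fun x hx => sub_nonpos.mpr (hβ.monotone (hinit x hx))
  have : (𝓝[Ioo 0 a] (0 : ℝ)).NeBot := left_nhdsWithin_Ioo_neBot ha
  have haT : Ioo 0 a ⊆ Icc 0 T := Ioo_subset_Icc_self.trans (Icc_subset_Icc_right (by linarith))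
  obtain ⟨c, hc, hc0, hca⟩ : ∃ c, (∀ x ∈ closure Ω, β (u₁ x c) - β (u₂ x c) < η) ∧ c ∈ Ioo 0 a :=
    ((hsmall.filter_mono (nhdsWithin_mono 0 haT)).and self_mem_nhdsWithin).exists
  have hcb : Icc c b ⊆ Icc 0 T := Icc_subset_Icc hc0.le hbT.le
  have hcont : ContinuousOn (fun x s => u₁ x s - u₂ x s).uncurry (closure Ω ×ˢ Icc c b) :=
    (hc₁.sub hc₂).mono (prod_mono_right hcb)
  calc ∫ s in Icc a b, max (u₁ z s - u₂ z s) 0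
      ≤ ∫ s in Icc c b, max (u₁ z s - u₂ z s) 0 :=
        setIntegral_mono_set ((hcont.uncurry_left z hz).sup continuousOn_const).integrableOn_Icc
          (ae_of_all _ fun s => le_max_right _ _) (Icc_subset_Icc_left hca.le).eventuallyLE
    _ ≤ η * R ^ 2 :=
        setIntegral_max_sub_zero_le hβ hΩ hΩbdd isOpen_Ioo h₁ h₂ (hca.le.trans hab)
          (Icc_subset_Ioo hc0 hbT) hη hcont (fun x hx => (hc x hx).le)
          (fun x hx s hs => hbdry x hx s (hcb hs)) hR hz

theorem stmt9_general (hβ : StrictMono β) (hβc : Continuous β)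
    (hΩ : IsOpen Ω) (hΩbdd : Bornology.IsBounded Ω)
    (hc₁ : ContinuousOn u₁.uncurry (closure Ω ×ˢ Icc 0 T))
    (hc₂ : ContinuousOn u₂.uncurry (closure Ω ×ˢ Icc 0 T))
    (h₁ : IsFiltrationSubsolution β u₁ Ω (Ioo 0 T))
    (h₂ : IsFiltrationSupersolution β u₂ Ω (Ioo 0 T))
    (hinit : ∀ z ∈ closure Ω, u₁ z 0 ≤ u₂ z 0)
    (hbdry : ∀ z ∈ frontier Ω, ∀ t ∈ Icc 0 T, u₁ z t ≤ u₂ z t) :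
    ∀ z ∈ closure Ω, ∀ t ∈ Icc 0 T, u₁ z t ≤ u₂ z t := by
  intro z hz t ht
  obtain ⟨R, hR⟩ := hΩbdd.closure.exists_norm_le
  have hcz₁ : ContinuousOn (u₁ z) (Icc 0 T) := hc₁.uncurry_left z hz
  have hcz₂ : ContinuousOn (u₂ z) (Icc 0 T) := hc₂.uncurry_left z hz
  have hint : ∀ a b, 0 < a → a ≤ b → b < T → ∫ s in Icc a b, max (u₁ z s - u₂ z s) 0 ≤ 0 := by
    intro a b ha hab hbT
    have hlim : Tendsto (fun η : ℝ => η * R ^ 2) (𝓝[>] 0) (𝓝 0) :=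
      tendsto_nhdsWithin_of_tendsto_nhds (Continuous.tendsto' (by fun_prop) _ _ (zero_mul _))
    refine ge_of_tendsto hlim ?_
    filter_upwards [self_mem_nhdsWithin] with η hη
    exact setIntegral_max_sub_zero_le_of_initial_le hβ hβc hΩ hΩbdd hc₁ hc₂ h₁ h₂ hinit hbdry hR
      hη ha hab hbT hz
  have hle : ∀ s ∈ Ioo 0 T, u₁ z s ≤ u₂ z s := fun s ⟨hs0, hsT⟩ => by
    have hcont : ContinuousOn (fun r => u₁ z r - u₂ z r) (Icc (s / 2) s) :=
      (hcz₁.sub hcz₂).mono (Icc_subset_Icc (half_pos hs0).le hsT.le)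
    exact sub_nonpos.mp (nonpos_of_setIntegral_max_zero_nonpos (half_lt_self hs0) hcont
      (hint _ _ (half_pos hs0) (half_le_self hs0.le) hsT) s (right_mem_Icc.mpr (by linarith)))
  rcases ht.1.eq_or_lt with rfl | ht0
  · exact hinit z hz
  · have hclosure : closure (Ioo 0 T) = Icc 0 T := closure_Ioo (ht0.trans_le ht.2).ne
    exact le_on_closure hle (hclosure ▸ hcz₁) (hclosure ▸ hcz₂) (hclosure ▸ ht)

end Filtration

section RicciFlow

lemma lap_eq_laplacian (u : ℂ → ℝ) : lap u = Δ u :=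
  (InnerProductSpace.laplacian_eq_iteratedFDeriv_complexPlane u).symm

variable {u : ℂ → ℝ → ℝ} {Ω : Set ℂ} {T : ℝ}

lemma hasDerivAt_exp_two_mul_div_two {f : ℝ → ℝ} {l t : ℝ}
    (hf : HasDerivAt f (Real.exp (-2 * f t) * l) t) :
    HasDerivAt (fun s => Real.exp (2 * f s) / 2) l t := by
  refine ((hf.const_mul 2).exp.div_const 2).congr_deriv ?_
  have : Real.exp (2 * f t) * Real.exp (-2 * f t) = 1 := by
    rw [← Real.exp_add, neg_mul, add_neg_cancel, Real.exp_zero]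
  linear_combination l * this

lemma isFiltrationSubsolution_and_isFiltrationSupersolution_of_ricciFlow
    (hs : ContDiffOn ℝ (⊤ : ℕ∞) u.uncurry (Ω ×ˢ Ioc 0 T))
    (heq : ∀ z ∈ Ω, ∀ t ∈ Ioc 0 T,
      HasDerivWithinAt (u z) (Real.exp (-2 * u z t) * lap (u · t) z) (Ioc 0 T) t) :
    IsFiltrationSubsolution (fun y => Real.exp (2 * y) / 2) u Ω (Ioo 0 T) ∧
      IsFiltrationSupersolution (fun y => Real.exp (2 * y) / 2) u Ω (Ioo 0 T) := by
  have hC2 : ContDiffOn ℝ 2 u.uncurry (Ω ×ˢ Ioo 0 T) :=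
    (hs.mono (prod_mono_right Ioo_subset_Ioc_self)).of_le
      (WithTop.coe_le_coe.mpr (le_top : (2 : ℕ∞) ≤ ⊤))
  have hderiv : ∀ z ∈ Ω, ∀ t ∈ Ioo 0 T,
      HasDerivAt (fun s => Real.exp (2 * u z s) / 2) (Δ (u · t) z) t := fun z hz t ht =>
    hasDerivAt_exp_two_mul_div_two (lap_eq_laplacian (u · t) ▸
      (heq z hz t (Ioo_subset_Ioc_self ht)).hasDerivAt (Ioc_mem_nhds ht.1 ht.2))
  exact ⟨⟨hC2, fun z hz t ht => ⟨_, le_rfl, hderiv z hz t ht⟩⟩,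
    ⟨hC2, fun z hz t ht => ⟨_, le_rfl, hderiv z hz t ht⟩⟩⟩

end RicciFlow

/-- parabolic comparison principle for 2D Ricci flow: on a bounded open set
`Ω ⊆ ℂ`, if `u₁, u₂` are continuous on `Ω̄ × [0,T]`, smooth solutions of
`∂u/∂t = e^{-2u}Δu` on `Ω × (0,T]`, and `u₁ ≤ u₂` on the parabolic boundary
`(Ω̄ × {0}) ∪ (∂Ω × [0,T])`, then `u₁ ≤ u₂` on `Ω̄ × [0,T]`. -/
theorem stmt9 (Ω : Set ℂ) (hΩ : IsOpen Ω) (hΩbdd : Bornology.IsBounded Ω)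
    (T : ℝ) (hT : 0 < T) (u₁ u₂ : ℂ → ℝ → ℝ)
    (hc₁ : ContinuousOn (fun p : ℂ × ℝ => u₁ p.1 p.2) (closure Ω ×ˢ Icc 0 T))
    (hc₂ : ContinuousOn (fun p : ℂ × ℝ => u₂ p.1 p.2) (closure Ω ×ˢ Icc 0 T))
    (hs₁ : ContDiffOn ℝ (⊤ : ℕ∞) (fun p : ℂ × ℝ => u₁ p.1 p.2) (Ω ×ˢ Ioc 0 T))
    (hs₂ : ContDiffOn ℝ (⊤ : ℕ∞) (fun p : ℂ × ℝ => u₂ p.1 p.2) (Ω ×ˢ Ioc 0 T))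
    (heq₁ : ∀ z ∈ Ω, ∀ t ∈ Ioc (0:ℝ) T,
      HasDerivWithinAt (u₁ z) (Real.exp (-2 * u₁ z t) * lap (fun w => u₁ w t) z) (Ioc 0 T) t)
    (heq₂ : ∀ z ∈ Ω, ∀ t ∈ Ioc (0:ℝ) T,
      HasDerivWithinAt (u₂ z) (Real.exp (-2 * u₂ z t) * lap (fun w => u₂ w t) z) (Ioc 0 T) t)
    (hinit : ∀ z ∈ closure Ω, u₁ z 0 ≤ u₂ z 0)
    (hbdry : ∀ z ∈ frontier Ω, ∀ t ∈ Icc (0:ℝ) T, u₁ z t ≤ u₂ z t) :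
    ∀ z ∈ closure Ω, ∀ t ∈ Icc (0:ℝ) T, u₁ z t ≤ u₂ z t :=
  stmt9_general (fun _ _ h => by gcongr) (by fun_prop) hΩ hΩbdd hc₁ hc₂
    (isFiltrationSubsolution_and_isFiltrationSupersolution_of_ricciFlow hs₁ heq₁).1
    (isFiltrationSubsolution_and_isFiltrationSupersolution_of_ricciFlow hs₂ heq₂).2 hinit hbdry
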